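/- arXiv:2503.19181 — 8 statements merged into one kernel-verified Lean document; each statement's English description precedes it below -/
import Mathlib

section
/- Let τ, τ' : E → F be matroid homomorphisms between binary matroids E ⊆ (Fin m → ZMod 2) and F ⊆ (Fin k → ZMod 2), and let C be a cocircuit of E. The following are equivalent: (1) for every e ∈ E, τ(e) ≠ τ'(e) if and only if e ∈ C; (2) there exists a nonzero vector c ∈ (Fin k → ZMod 2) such that τ'(e) = τ(e) + c for all e ∈ C and τ'(e) = τ(e) for all e ∉ C. -/
/-- A circuit of a binary matroid with point set `E`: a minimal nonempty subset summing to 0. -/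
def IsCircuit {P : Type*} [AddCommGroup P] (E Z : Finset P) : Prop :=
  Z ⊆ E ∧ Z.Nonempty ∧ ∑ e ∈ Z, e = 0 ∧
    ∀ Z' ⊆ Z, Z'.Nonempty → ∑ e ∈ Z', e = 0 → Z' = Z

/-- A cocircuit: a minimal nonempty subset meeting every circuit evenly. -/
def IsCocircuit {P : Type*} [AddCommGroup P] [DecidableEq P] (E C : Finset P) : Prop :=
  C ⊆ E ∧ C.Nonempty ∧ (∀ Z, IsCircuit E Z → Even (C ∩ Z).card) ∧
    ∀ C' ⊆ C, C'.Nonempty → (∀ Z, IsCircuit E Z → Even (C' ∩ Z).card) → C' = C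

/-- A matroid homomorphism from the matroid on `E` to the matroid on `F`. -/
def IsMHom {P Q : Type*} [AddCommGroup P] [AddCommGroup Q]
    (E : Finset P) (F : Finset Q) (τ : P → Q) : Prop :=
  (∀ e ∈ E, τ e ∈ F) ∧ ∀ Z, IsCircuit E Z → ∑ e ∈ Z, τ e = 0

/-- Adjacency in the recolouring graph: the maps differ exactly on a cocircuit. -/
def MAdj {P Q : Type*} [AddCommGroup P] [AddCommGroup Q] [DecidableEq P]
    (E : Finset P) (τ τ' : P → Q) : Prop :=
  ∃ C, IsCocircuit E C ∧ ∀ e ∈ E, (τ e ≠ τ' e ↔ e ∈ C)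

/-- One step of a walk in `mCol(E,F)`: both maps are homomorphisms and they are
equal (as maps on `E`) or adjacent. -/
def MStep {P Q : Type*} [AddCommGroup P] [AddCommGroup Q] [DecidableEq P]
    (E : Finset P) (F : Finset Q) (τ τ' : P → Q) : Prop :=
  IsMHom E F τ ∧ IsMHom E F τ' ∧ ((∀ e ∈ E, τ e = τ' e) ∨ MAdj E τ τ')

/-- Joined by a walk in the recolouring graph `mCol(E,F)`. -/
def MWalk {P Q : Type*} [AddCommGroup P] [AddCommGroup Q] [DecidableEq P]
    (E : Finset P) (F : Finset Q) : (P → Q) → (P → Q) → Prop :=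
  Relation.ReflTransGen (MStep E F)

/-- The indicator vector of a vertex. -/
def ind {V : Type*} [DecidableEq V] (u : V) : V → ZMod 2 := Pi.single u 1

/-- The decision graph of a set `F` of nonzero vectors. -/
def decisionGraph {m : ℕ} (F : Finset (Fin m → ZMod 2)) : SimpleGraph (Fin m → ZMod 2) where
  Adj v w := v + w ∈ F ∧ v ≠ w
  symm := by
    constructor
    intro v w h
    exact ⟨by rw [add_comm]; exact h.1, h.2.symm⟩
  loopless := by
    constructor
    intro v h
    exact h.2 rfl

/-- The weight of a vector: its number of nonzero coordinates. -/
def wt {n : ℕ} (e : Fin n → ZMod 2) : ℕ := (Finset.univ.filter fun i => e i ≠ 0).card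

/-!
The difference `δ = τ' - τ` of two homomorphisms sums to zero over every circuit. For a linear
functional `f` to `ZMod 2`, the support of `f ∘ δ` therefore meets every circuit evenly. If `δ`
vanishes off the cocircuit `C`, this support is contained in `C`, so by minimality of `C` it is
empty or all of `C`. Hence every `f ∘ δ` is constant on `C`, and since functionals separate
points, so is `δ`; its constant value is `c`.
-/

/-- `δ` sums to zero over every circuit of `E`: the linear condition in `IsMHom`, with no target
matroid prescribed, so that the functions satisfying it are closed under differences. -/
def VanishesOnCircuits {P Q : Type*} [AddCommGroup P] [AddCommGroup Q]
    (E : Finset P) (δ : P → Q) : Prop :=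
  ∀ Z, IsCircuit E Z → ∑ e ∈ Z, δ e = 0

theorem natCast_card_filter_ne_zero_eq_sum {α : Type*} (s : Finset α) (δ : α → ZMod 2) :
    ((s.filter (δ · ≠ 0)).card : ZMod 2) = ∑ e ∈ s, δ e := by
  have ite_ne_zero_eq_self : ∀ x : ZMod 2, (if x ≠ 0 then 1 else 0) = x := by decide
  simp only [Finset.natCast_card_filter, ite_ne_zero_eq_self]

section

variable {P Q : Type*} [AddCommGroup P] [AddCommGroup Q] {E C : Finset P}

namespace VanishesOnCircuits

theorem sub {δ δ' : P → Q} (hδ : VanishesOnCircuits E δ) (hδ' : VanishesOnCircuits E δ') :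
    VanishesOnCircuits E (δ - δ') := fun Z hZ => by
  simp only [Pi.sub_apply, Finset.sum_sub_distrib, hδ Z hZ, hδ' Z hZ, sub_zero]

theorem map {R : Type*} [AddCommGroup R] {δ : P → Q} (hδ : VanishesOnCircuits E δ) (f : Q →+ R) :
    VanishesOnCircuits E (f ∘ δ) := fun Z hZ => by
  simp only [Function.comp_apply, ← map_sum, hδ Z hZ, map_zero]

theorem even_card_support_inter [DecidableEq P] {δ : P → ZMod 2} (hδ : VanishesOnCircuits E δ)
    {Z : Finset P} (hZ : IsCircuit E Z) : Even (E.filter (δ · ≠ 0) ∩ Z).card := by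
  rw [Finset.filter_inter, Finset.inter_eq_right.2 hZ.1, ← ZMod.natCast_eq_zero_iff_even,
    natCast_card_filter_ne_zero_eq_sum, hδ Z hZ]

end VanishesOnCircuits

namespace IsCocircuit

variable [DecidableEq P]

theorem support_eq_empty_or_eq (hC : IsCocircuit E C) {δ : P → ZMod 2}
    (hδ : VanishesOnCircuits E δ) (hsupp : ∀ e ∈ E, δ e ≠ 0 → e ∈ C) :
    E.filter (δ · ≠ 0) = ∅ ∨ E.filter (δ · ≠ 0) = C := by
  obtain ⟨-, -, -, hmin⟩ := hC
  have hsub : E.filter (δ · ≠ 0) ⊆ C := fun e he =>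
    hsupp e (Finset.mem_filter.1 he).1 (Finset.mem_filter.1 he).2
  exact (Finset.eq_empty_or_nonempty _).imp_right fun hne =>
    hmin _ hsub hne fun _ => hδ.even_card_support_inter

theorem apply_eq_apply_of_zmod_two (hC : IsCocircuit E C) {δ : P → ZMod 2}
    (hδ : VanishesOnCircuits E δ) (hsupp : ∀ e ∈ E, δ e ≠ 0 → e ∈ C)
    {a b : P} (ha : a ∈ C) (hb : b ∈ C) : δ a = δ b := by
  rcases hC.support_eq_empty_or_eq hδ hsupp with hempty | hfull
  · have hzero : ∀ e ∈ C, δ e = 0 := fun e he =>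
      not_not.1 (Finset.filter_eq_empty_iff.1 hempty (hC.1 he))
    rw [hzero a ha, hzero b hb]
  · have hone : ∀ e ∈ C, δ e = 1 := fun e he => by
      rw [← hfull, Finset.mem_filter] at he
      exact Fin.eq_one_of_ne_zero _ he.2
    rw [hone a ha, hone b hb]

theorem apply_eq_apply [Module (ZMod 2) Q] (hC : IsCocircuit E C) {δ : P → Q}
    (hδ : VanishesOnCircuits E δ) (hsupp : ∀ e ∈ E, δ e ≠ 0 → e ∈ C)
    {a b : P} (ha : a ∈ C) (hb : b ∈ C) : δ a = δ b := by
  rw [← sub_eq_zero, ← Module.forall_dual_apply_eq_zero_iff (ZMod 2)]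
  intro f
  rw [map_sub, sub_eq_zero]
  exact hC.apply_eq_apply_of_zmod_two (hδ.map f.toAddMonoidHom)
    (fun e he hne => hsupp e he fun hzero => hne (by simp [hzero])) ha hb

end IsCocircuit

theorem stmt1_general [DecidableEq P] [Module (ZMod 2) Q] {τ τ' : P → Q}
    (hδ : VanishesOnCircuits E (τ' - τ)) (hC : IsCocircuit E C) :
    (∀ e ∈ E, (τ e ≠ τ' e ↔ e ∈ C)) ↔
      ∃ c : Q, c ≠ 0 ∧ (∀ e ∈ C, τ' e = τ e + c) ∧ ∀ e ∈ E, e ∉ C → τ' e = τ e := by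
  constructor
  · intro hdiff
    obtain ⟨a, ha⟩ := hC.2.1
    have hsupp : ∀ e ∈ E, (τ' - τ) e ≠ 0 → e ∈ C := fun e he hne =>
      (hdiff e he).1 (sub_ne_zero.1 hne).symm
    refine ⟨(τ' - τ) a, sub_ne_zero.2 ((hdiff a (hC.1 ha)).2 ha).symm, fun e he => ?_,
      fun e he heC => (not_ne_iff.1 (mt (hdiff e he).1 heC)).symm⟩
    rw [hC.apply_eq_apply hδ hsupp ha he, Pi.sub_apply, add_sub_cancel]
  · rintro ⟨c, hc, hon, hoff⟩ e he
    by_cases heC : e ∈ C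
    · simp [heC, hon e heC, hc]
    · simp [heC, hoff e he heC]

end

theorem stmt1 (m k : ℕ) (E : Finset (Fin m → ZMod 2)) (F : Finset (Fin k → ZMod 2))
    (τ τ' : (Fin m → ZMod 2) → (Fin k → ZMod 2))
    (hτ : IsMHom E F τ) (hτ' : IsMHom E F τ')
    (C : Finset (Fin m → ZMod 2)) (hC : IsCocircuit E C) :
    (∀ e ∈ E, (τ e ≠ τ' e ↔ e ∈ C)) ↔
      (∃ c : Fin k → ZMod 2, c ≠ 0 ∧ (∀ e ∈ C, τ' e = τ e + c) ∧
        ∀ e ∈ E, e ∉ C → τ' e = τ e) :=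
  stmt1_general (VanishesOnCircuits.sub hτ'.2 hτ.2) hC
end

section
/- Let τ : E → F be a matroid homomorphism between binary matroids E ⊆ (Fin m → ZMod 2) and F ⊆ (Fin k → ZMod 2), let C be a cocircuit of E, and let c ∈ (Fin k → ZMod 2) be a vector such that τ(e) + c ∈ F for every e ∈ C. Then the map τ' defined by τ'(e) = τ(e) + c for e ∈ C and τ'(e) = τ(e) for e ∉ C is a matroid homomorphism from E to F; moreover, if c ≠ 0 then τ' is adjacent to τ in the recolouring graph mCol(E, F). -/
/-!
Shifting `τ` by `c` on `C` changes the sum of `τ` over a circuit `Z` by `#(C ∩ Z) • c`. A cocircuit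
meets every circuit evenly, so this change is a multiple of `c + c = 0`.
-/

/-- The recolouring of `τ` that adds `c` on `C` and keeps `τ` elsewhere. With `C` a cocircuit,
`c ≠ 0` and values in the target matroid, it is a neighbour of `τ` in the recolouring graph. -/
def recolour {P Q : Type*} [Add Q] [DecidableEq P] (τ : P → Q) (C : Finset P) (c : Q) : P → Q :=
  fun e => if e ∈ C then τ e + c else τ e

section Recolour

variable {P Q : Type*} [DecidableEq P] {τ : P → Q} {C : Finset P} {c : Q} {e : P}

theorem recolour_of_mem [Add Q] (he : e ∈ C) : recolour τ C c e = τ e + c :=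
  if_pos he

theorem recolour_of_notMem [Add Q] (he : e ∉ C) : recolour τ C c e = τ e :=
  if_neg he

theorem recolour_eq_add_ite [AddZeroClass Q] (τ : P → Q) (C : Finset P) (c : Q) (e : P) :
    recolour τ C c e = τ e + if e ∈ C then c else 0 := by
  rw [recolour, add_ite, add_zero]

theorem ne_recolour_iff_mem [AddLeftCancelMonoid Q] (hc : c ≠ 0) :
    τ e ≠ recolour τ C c e ↔ e ∈ C := by
  simp [recolour_eq_add_ite, hc]

theorem sum_recolour [AddCommMonoid Q] (τ : P → Q) (C : Finset P) (c : Q) (Z : Finset P) :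
    ∑ e ∈ Z, recolour τ C c e = ∑ e ∈ Z, τ e + (C ∩ Z).card • c := by
  simp only [recolour_eq_add_ite, Finset.sum_add_distrib, Finset.sum_ite_mem, Finset.sum_const,
    Finset.inter_comm]

theorem sum_recolour_of_even [AddCommMonoid Q] (hc : c + c = 0) {Z : Finset P}
    (hCZ : Even (C ∩ Z).card) : ∑ e ∈ Z, recolour τ C c e = ∑ e ∈ Z, τ e := by
  obtain ⟨r, hr⟩ := hCZ
  rw [sum_recolour, hr, add_nsmul, ← nsmul_add, hc, nsmul_zero, add_zero]

end Recolour

section Matroid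

variable {P Q : Type*} [AddCommGroup P] [AddCommGroup Q] [DecidableEq P]
  {E C : Finset P} {F : Finset Q} {τ : P → Q} {c : Q}

theorem IsCocircuit.even_card_inter (hC : IsCocircuit E C) {Z : Finset P} (hZ : IsCircuit E Z) :
    Even (C ∩ Z).card :=
  hC.2.2.1 Z hZ

theorem IsMHom.recolour (hτ : IsMHom E F τ) (hC : ∀ Z, IsCircuit E Z → Even (C ∩ Z).card)
    (hc : c + c = 0) (hF : ∀ e ∈ C, τ e + c ∈ F) : IsMHom E F (recolour τ C c) := by
  refine ⟨fun e he => ?_, fun Z hZ => ?_⟩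
  · by_cases heC : e ∈ C
    · rw [recolour_of_mem heC]
      exact hF e heC
    · rw [recolour_of_notMem heC]
      exact hτ.1 e he
  · rw [sum_recolour_of_even hc (hC Z hZ), hτ.2 Z hZ]

theorem IsCocircuit.mAdj_recolour (hC : IsCocircuit E C) (hc : c ≠ 0) :
    MAdj E τ (recolour τ C c) :=
  ⟨C, hC, fun _ _ => ne_recolour_iff_mem hc⟩

theorem stmt2_general (hτ : IsMHom E F τ) (hC : IsCocircuit E C) (hc : c + c = 0)
    (hF : ∀ e ∈ C, τ e + c ∈ F) :
    IsMHom E F (recolour τ C c) ∧ (c ≠ 0 → MAdj E τ (recolour τ C c)) :=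
  ⟨hτ.recolour (fun _ => hC.even_card_inter) hc hF, hC.mAdj_recolour⟩

end Matroid

theorem stmt2 (m k : ℕ) (E : Finset (Fin m → ZMod 2)) (F : Finset (Fin k → ZMod 2))
    (τ : (Fin m → ZMod 2) → (Fin k → ZMod 2)) (hτ : IsMHom E F τ)
    (C : Finset (Fin m → ZMod 2)) (hC : IsCocircuit E C)
    (c : Fin k → ZMod 2) (hc : ∀ e ∈ C, τ e + c ∈ F) :
    IsMHom E F (fun e => if e ∈ C then τ e + c else τ e) ∧
      (c ≠ 0 → MAdj E τ (fun e => if e ∈ C then τ e + c else τ e)) :=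
  stmt2_general hτ hC (ZModModule.add_self c) hc
end

section
/- Let E ⊆ (Fin m → ZMod 2) be a simple binary matroid, let t ≥ 0, and let F be the set of all vectors of (Fin t → ZMod 2) (the point set of the looped projective geometry PG^ℓ(t,2)). Then any two matroid homomorphisms τ, σ : E → F are joined by a walk in the recolouring graph mCol(E, F); that is, mCol(E, F) is connected. -/
/-!
A sum of homomorphisms is a homomorphism, and so is `1_D • v` for every vector `v` and every
cocycle `D`, that is, every set of points meeting each circuit evenly. A cocycle is a disjoint
union of cocircuits, so adding `1_D • v` to a homomorphism can be done one cocircuit at a time: it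
is a walk in the recolouring graph. In a basis `b` of the target, the difference of two
homomorphisms is `∑ i, 1_{D i} • b i`, where the support `D i` of its `i`-th coordinate is a
cocycle.
-/

open Finset

section Cocycle

variable {P : Type*} [AddCommGroup P] [DecidableEq P] {E C D : Finset P}

/-- A cocycle of the binary matroid on `E`: a set of points, possibly empty, meeting every circuit
evenly. The cocircuits are the minimal nonempty cocycles. -/
def IsCocycle (E D : Finset P) : Prop :=
  D ⊆ E ∧ ∀ Z, IsCircuit E Z → Even #(D ∩ Z)

theorem IsCocircuit.isCocycle (hC : IsCocircuit E C) : IsCocycle E C :=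
  ⟨hC.1, hC.2.2.1⟩

theorem IsCocircuit.nonempty (hC : IsCocircuit E C) : C.Nonempty :=
  hC.2.1

theorem isCocircuit_of_minimal (hC : Minimal (fun D ↦ IsCocycle E D ∧ D.Nonempty) C) :
    IsCocircuit E C :=
  ⟨hC.prop.1.1, hC.prop.2, hC.prop.1.2, fun _ hsub hne heven ↦
    hC.eq_of_le ⟨⟨hsub.trans hC.prop.1.1, heven⟩, hne⟩ hsub⟩

theorem IsCocycle.exists_isCocircuit_subset (hD : IsCocycle E D) (hne : D.Nonempty) :
    ∃ C ⊆ D, IsCocircuit E C :=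
  let ⟨C, hCD, hC⟩ := exists_minimal_le_of_wellFoundedLT
    (fun D ↦ IsCocycle E D ∧ D.Nonempty) D ⟨hD, hne⟩
  ⟨C, hCD, isCocircuit_of_minimal hC⟩

theorem IsCocycle.sdiff (hD : IsCocycle E D) (hC : IsCocycle E C) (hCD : C ⊆ D) :
    IsCocycle E (D \ C) := by
  refine ⟨sdiff_subset.trans hD.1, fun Z hZ ↦ ?_⟩
  have hinter : D \ C ∩ Z = (D ∩ Z) \ (C ∩ Z) := inf_sdiff_distrib_right D C Z
  rw [hinter, card_sdiff_of_subset (inter_subset_inter_right hCD)]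
  exact (hD.2 Z hZ).tsub (hC.2 Z hZ)

theorem IsCocycle.induction_disjoint_union {p : Finset P → Prop} (empty : p ∅)
    (union : ∀ C D, IsCocircuit E C → IsCocycle E D → Disjoint C D → p D → p (C ∪ D))
    (hD : IsCocycle E D) : p D := by
  induction D using Finset.strongInduction with
  | H D ih =>
    obtain rfl | hne := D.eq_empty_or_nonempty
    · exact empty
    obtain ⟨C, hCD, hC⟩ := hD.exists_isCocircuit_subset hne
    have hdiff : IsCocycle E (D \ C) := hD.sdiff hC.isCocycle hCD
    rw [← union_sdiff_of_subset hCD]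
    exact union C (D \ C) hC hdiff disjoint_sdiff (ih _ (sdiff_ssubset hCD hC.nonempty) hdiff)

end Cocycle

section Homomorphism

variable {P Q R : Type*} [AddCommGroup P] [AddCommGroup Q] [Fintype Q] [AddCommGroup R] [Fintype R]
  {E : Finset P} {τ σ : P → Q}

theorem isMHom_univ_iff : IsMHom E univ τ ↔ ∀ Z, IsCircuit E Z → ∑ e ∈ Z, τ e = 0 :=
  and_iff_right fun _ _ ↦ mem_univ _

theorem IsMHom.add (hτ : IsMHom E univ τ) (hσ : IsMHom E univ σ) : IsMHom E univ (τ + σ) :=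
  isMHom_univ_iff.2 fun Z hZ ↦ by
    simp only [Pi.add_apply, sum_add_distrib, hτ.2 Z hZ, hσ.2 Z hZ, add_zero]

theorem IsMHom.sub (hτ : IsMHom E univ τ) (hσ : IsMHom E univ σ) : IsMHom E univ (τ - σ) :=
  isMHom_univ_iff.2 fun Z hZ ↦ by
    simp only [Pi.sub_apply, sum_sub_distrib, hτ.2 Z hZ, hσ.2 Z hZ, sub_zero]

theorem IsMHom.addMonoidHom_comp (hτ : IsMHom E univ τ) (φ : Q →+ R) : IsMHom E univ (φ ∘ τ) :=
  isMHom_univ_iff.2 fun Z hZ ↦ by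
    simp only [Function.comp_apply, ← map_sum, hτ.2 Z hZ, map_zero]

theorem IsCocycle.isMHom_indicator [DecidableEq P] [Module (ZMod 2) Q] {D : Finset P}
    (hD : IsCocycle E D) (v : Q) :
    IsMHom E univ ((D : Set P).indicator fun _ ↦ v) := by
  refine isMHom_univ_iff.2 fun Z hZ ↦ ?_
  obtain ⟨k, hk⟩ := hD.2 Z hZ
  calc ∑ e ∈ Z, (D : Set P).indicator (fun _ ↦ v) e
      = #(D ∩ Z) • v := by
        simp only [Set.indicator_apply, mem_coe, sum_ite_mem, sum_const, inter_comm]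
    _ = 0 := by rw [hk, add_nsmul, ZModModule.add_self]

theorem IsMHom.isCocycle_filter_ne_zero [DecidableEq P] {f : P → ZMod 2}
    (hf : IsMHom E univ f) : IsCocycle E {e ∈ E | f e ≠ 0} := by
  refine ⟨filter_subset _ _, fun Z hZ ↦ ?_⟩
  have ite_ne_zero : ∀ a : ZMod 2, (if a ≠ 0 then 1 else 0) = a := by decide
  rw [← ZMod.natCast_eq_zero_iff_even, filter_inter, inter_eq_right.2 hZ.1,
    natCast_card_filter]
  simpa only [ite_ne_zero] using hf.2 Z hZ

end Homomorphism

section Walk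

variable {P Q : Type*} [AddCommGroup P] [DecidableEq P] [AddCommGroup Q] {E : Finset P}
  {τ σ : P → Q}

theorem MWalk.refl (E : Finset P) (F : Finset Q) (τ : P → Q) : MWalk E F τ τ :=
  Relation.ReflTransGen.refl

theorem MWalk.isMHom_right {F : Finset Q} (h : MWalk E F τ σ) (hτ : IsMHom E F τ) :
    IsMHom E F σ := by
  induction h with
  | refl => exact hτ
  | tail _ hstep _ => exact hstep.2.1

variable [Fintype Q] [Module (ZMod 2) Q]

theorem IsMHom.mStep_add_indicator_of_isCocircuit (hτ : IsMHom E univ τ) {C : Finset P}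
    (hC : IsCocircuit E C) (v : Q) :
    MStep E univ τ (τ + (C : Set P).indicator fun _ ↦ v) := by
  refine ⟨hτ, hτ.add (hC.isCocycle.isMHom_indicator v), ?_⟩
  obtain rfl | hv := eq_or_ne v 0
  · exact .inl fun e _ ↦ by simp
  · exact .inr ⟨C, hC, fun e _ ↦ by simp [hv]⟩

theorem IsMHom.mWalk_add_indicator (hτ : IsMHom E univ τ) {D : Finset P} (hD : IsCocycle E D)
    (v : Q) : MWalk E univ τ (τ + (D : Set P).indicator fun _ ↦ v) := by
  refine hD.induction_disjoint_union
    (p := fun D ↦ MWalk E univ τ (τ + (D : Set P).indicator fun _ ↦ v)) ?_ ?_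
  · rw [coe_empty, Set.indicator_empty', add_zero]
    exact MWalk.refl E univ τ
  · intro C D hC _ hdisj hwalk
    rw [coe_union, Set.indicator_union_of_disjoint (disjoint_coe.2 hdisj), ← Pi.add_def,
      add_comm ((C : Set P).indicator _), ← add_assoc]
    exact hwalk.tail ((hwalk.isMHom_right hτ).mStep_add_indicator_of_isCocircuit hC v)

theorem IsMHom.mWalk_add_smul (hτ : IsMHom E univ τ) {f : P → ZMod 2} (hf : IsMHom E univ f)
    (v : Q) : MWalk E univ τ (τ + fun e ↦ f e • v) := by
  have hwalk := hτ.mWalk_add_indicator hf.isCocycle_filter_ne_zero v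
  have hend : IsMHom E univ (τ + fun e ↦ f e • v) :=
    hτ.add (hf.addMonoidHom_comp (LinearMap.toSpanSingleton (ZMod 2) Q v).toAddMonoidHom)
  refine hwalk.tail ⟨hwalk.isMHom_right hτ, hend, .inl fun e he ↦ ?_⟩
  obtain hzero | hone : f e = 0 ∨ f e = 1 := (by decide : ∀ a : ZMod 2, a = 0 ∨ a = 1) (f e)
  · simp [hzero]
  · simp [hone, he]

theorem IsMHom.mWalk_add_sum_smul (hτ : IsMHom E univ τ) {ι : Type*} (s : Finset ι)
    {f : ι → P → ZMod 2} (hf : ∀ i ∈ s, IsMHom E univ (f i)) (v : ι → Q) :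
    MWalk E univ τ (τ + ∑ i ∈ s, fun e ↦ f i e • v i) := by
  classical
  induction s using Finset.induction_on with
  | empty => simpa using MWalk.refl E univ τ
  | insert i s hi ih =>
    have hwalk := ih fun j hj ↦ hf j (mem_insert_of_mem hj)
    rw [sum_insert hi, add_comm (fun e ↦ f i e • v i), ← add_assoc]
    exact hwalk.trans ((hwalk.isMHom_right hτ).mWalk_add_smul (hf i (mem_insert_self i s)) (v i))

end Walk

theorem stmt3_general {P Q : Type*} [AddCommGroup P] [DecidableEq P] [AddCommGroup Q] [Fintype Q]
    [Module (ZMod 2) Q] {E : Finset P} {τ σ : P → Q} (hτ : IsMHom E univ τ)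
    (hσ : IsMHom E univ σ) : MWalk E univ τ σ := by
  let b := Module.finBasis (ZMod 2) Q
  have hcoord (i) : IsMHom E univ (b.coord i ∘ (σ - τ)) :=
    (hσ.sub hτ).addMonoidHom_comp (b.coord i).toAddMonoidHom
  have hsum : σ = τ + ∑ i, fun e ↦ (b.coord i ∘ (σ - τ)) e • b i := by
    ext1 e
    rw [Pi.add_apply, Finset.sum_apply]
    exact sub_eq_iff_eq_add'.1 (b.sum_repr ((σ - τ) e)).symm
  rw [hsum]
  exact hτ.mWalk_add_sum_smul univ (fun i _ ↦ hcoord i) b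

theorem stmt3 (m t : ℕ) (E : Finset (Fin m → ZMod 2)) (hE : ∀ e ∈ E, e ≠ 0)
    (τ σ : (Fin m → ZMod 2) → (Fin t → ZMod 2))
    (hτ : IsMHom E (Finset.univ : Finset (Fin t → ZMod 2)) τ)
    (hσ : IsMHom E (Finset.univ : Finset (Fin t → ZMod 2)) σ) :
    MWalk E (Finset.univ : Finset (Fin t → ZMod 2)) τ σ :=
  stmt3_general hτ hσ
end

section
/- Let L ⊆ (Fin l → ZMod 2), M ⊆ (Fin m → ZMod 2), and N ⊆ (Fin k → ZMod 2) be binary matroids, let α, α' : L → M be matroid homomorphisms that are adjacent in the recolouring graph mCol(L, M), and let β : M → N be a matroid homomorphism. Then β ∘ α and β ∘ α' are either equal or adjacent in mCol(L, N). -/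
/-!
A homomorphism sums to zero over every cycle, since cycles are disjoint unions of circuits; hence
homomorphisms respect all linear relations over `ZMod 2` between points, and so compose.

If `α` and `α'` differ only on a cocircuit `C`, so do `β ∘ α` and `β ∘ α'`. Suppose the latter
differ at some point `e₀`. A linear functional separating their values at `e₀` turns their
difference into a `ZMod 2`-valued function summing to zero over circuits. Its support is a nonempty
subset of `C` meeting every circuit evenly, so by minimality it is all of `C`.
-/

section General

variable {P Q R : Type*} [AddCommGroup P] [AddCommGroup Q] [AddCommGroup R]

theorem isCircuit_of_subset_of_minimal {E Z : Finset P} (hZE : Z ⊆ E)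
    (hZ : Minimal (fun Y : Finset P => Y.Nonempty ∧ ∑ e ∈ Y, e = 0) Z) : IsCircuit E Z :=
  ⟨hZE, hZ.prop.1, hZ.prop.2, fun _ hY hY_ne hY_sum => hZ.eq_of_le ⟨hY_ne, hY_sum⟩ hY⟩

theorem exists_isCircuit_subset {E W : Finset P} (hWE : W ⊆ E) (hW : W.Nonempty)
    (hW_sum : ∑ e ∈ W, e = 0) : ∃ Z ⊆ W, IsCircuit E Z := by
  obtain ⟨Z, hZW, hZ⟩ := exists_minimal_le_of_wellFoundedLT
    (fun Y : Finset P => Y.Nonempty ∧ ∑ e ∈ Y, e = 0) W ⟨hW, hW_sum⟩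
  exact ⟨Z, hZW, isCircuit_of_subset_of_minimal (hZW.trans hWE) hZ⟩

theorem IsMHom.sum_eq_zero_of_cycle {E : Finset P} {F : Finset Q} {τ : P → Q} (hτ : IsMHom E F τ)
    {W : Finset P} (hWE : W ⊆ E) (hW_sum : ∑ e ∈ W, e = 0) : ∑ e ∈ W, τ e = 0 := by
  classical
  induction W using Finset.strongInduction with
  | H W ih =>
    obtain rfl | hW := W.eq_empty_or_nonempty
    · exact Finset.sum_empty
    obtain ⟨Z, hZW, hZ⟩ := exists_isCircuit_subset hWE hW hW_sum
    have hrest : ∑ e ∈ W \ Z, e = 0 := by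
      rw [Finset.sum_sdiff_eq_sub hZW, hW_sum, hZ.2.2.1, sub_zero]
    rw [← Finset.sum_sdiff hZW, hτ.2 Z hZ, add_zero]
    exact ih (W \ Z) (Finset.sdiff_ssubset hZW hZ.2.1) (Finset.sdiff_subset.trans hWE) hrest

theorem linearCombination_zmod_two_eq_sum_support {ι V : Type*} [AddCommMonoid V]
    [Module (ZMod 2) V] (v : ι → V) (c : ι →₀ ZMod 2) :
    Finsupp.linearCombination (ZMod 2) v c = ∑ i ∈ c.support, v i := by
  rw [Finsupp.linearCombination_apply]
  refine Finset.sum_congr rfl fun i hi => ?_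
  have hci : c i = 1 := Fin.eq_one_of_ne_zero (c i) (Finsupp.mem_support_iff.mp hi)
  simp only [hci, one_smul]

theorem IsMHom.linearCombination_eq_zero [Module (ZMod 2) P] [Module (ZMod 2) Q] {E : Finset P}
    {F : Finset Q} {τ : P → Q} (hτ : IsMHom E F τ) {c : P →₀ ZMod 2} (hcE : c.support ⊆ E)
    (hc : Finsupp.linearCombination (ZMod 2) id c = 0) :
    Finsupp.linearCombination (ZMod 2) τ c = 0 := by
  rw [linearCombination_zmod_two_eq_sum_support] at hc ⊢
  exact hτ.sum_eq_zero_of_cycle hcE hc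

theorem linearCombination_sum_single_one {ι κ S V : Type*} [Semiring S] [AddCommMonoid V]
    [Module S V] (v : κ → V) (f : ι → κ) (Z : Finset ι) :
    Finsupp.linearCombination S v (∑ e ∈ Z, Finsupp.single (f e) 1) = ∑ e ∈ Z, v (f e) := by
  simp only [map_sum, Finsupp.linearCombination_single, one_smul]

theorem IsMHom.comp [Module (ZMod 2) Q] [Module (ZMod 2) R] {L : Finset P} {M : Finset Q}
    {N : Finset R} {β : Q → R} {α : P → Q} (hβ : IsMHom M N β) (hα : IsMHom L M α) :
    IsMHom L N (β ∘ α) := by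
  classical
  refine ⟨fun e he => hβ.1 _ (hα.1 e he), fun Z hZ => ?_⟩
  -- The coefficient of `c` at a point is the parity of the fibre of `α` over it in `Z`.
  let c : Q →₀ ZMod 2 := ∑ e ∈ Z, Finsupp.single (α e) 1
  have hcM : c.support ⊆ M := fun q hq => by
    obtain ⟨e, he, hqe⟩ := Finset.mem_biUnion.mp (Finsupp.support_finsetSum hq)
    rw [Finset.mem_singleton.mp (Finsupp.support_single_subset hqe)]
    exact hα.1 e (hZ.1 he)
  have hc : Finsupp.linearCombination (ZMod 2) id c = 0 :=
    (linearCombination_sum_single_one id α Z).trans (hα.2 Z hZ)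
  exact (linearCombination_sum_single_one β α Z).symm.trans (hβ.linearCombination_eq_zero hcM hc)

theorem even_card_filter_ne_zero_iff {ι : Type*} (χ : ι → ZMod 2) (Z : Finset ι) :
    Even (Z.filter fun e => χ e ≠ 0).card ↔ ∑ e ∈ Z, χ e = 0 := by
  rw [← ZMod.natCast_eq_zero_iff_even, Finset.natCast_card_filter]
  have ite_ne_zero : ∀ a : ZMod 2, (if a ≠ 0 then 1 else 0) = a := by decide
  simp only [ite_ne_zero]

theorem IsCocircuit.forall_mem_ne_zero [DecidableEq P] {E C : Finset P} (hC : IsCocircuit E C)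
    {χ : P → ZMod 2} (hχ : ∀ Z, IsCircuit E Z → ∑ e ∈ Z, χ e = 0)
    (hχC : ∀ e ∈ E, χ e ≠ 0 → e ∈ C) {e₀ : P} (he₀ : e₀ ∈ E) (hχe₀ : χ e₀ ≠ 0) :
    ∀ e ∈ C, χ e ≠ 0 := by
  have inter_circuit (Z : Finset P) (hZ : IsCircuit E Z) :
      (C.filter fun e => χ e ≠ 0) ∩ Z = Z.filter fun e => χ e ≠ 0 := by
    ext e
    have mem_C_of_ne_zero (heZ : e ∈ Z) : χ e ≠ 0 → e ∈ C := hχC e (hZ.1 heZ)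
    simp only [Finset.mem_inter, Finset.mem_filter]
    tauto
  refine Finset.filter_eq_self.mp (hC.2.2.2 _ (Finset.filter_subset _ C) ?_ fun Z hZ => ?_)
  · exact ⟨e₀, Finset.mem_filter.mpr ⟨hχC e₀ he₀ hχe₀, hχe₀⟩⟩
  · rw [inter_circuit Z hZ]
    exact (even_card_filter_ne_zero_iff χ Z).mpr (hχ Z hZ)

theorem IsCocircuit.eq_or_mAdj [DecidableEq P] [Module (ZMod 2) Q] {E C : Finset P} {F : Finset Q}
    {τ τ' : P → Q} (hC : IsCocircuit E C) (hτ : IsMHom E F τ) (hτ' : IsMHom E F τ')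
    (hdiff : ∀ e ∈ E, τ e ≠ τ' e → e ∈ C) :
    (∀ e ∈ E, τ e = τ' e) ∨ MAdj E τ τ' := by
  refine or_iff_not_imp_left.mpr fun hneq => ?_
  push Not at hneq
  obtain ⟨e₀, he₀, hne⟩ := hneq
  obtain ⟨φ, hφ⟩ : ∃ φ : Module.Dual (ZMod 2) Q, φ (τ e₀ - τ' e₀) ≠ 0 := by
    by_contra! h
    exact hne (sub_eq_zero.mp ((Module.forall_dual_apply_eq_zero_iff (ZMod 2) _).mp h))
  have ne_of_apply_ne_zero {e : P} (h : φ (τ e - τ' e) ≠ 0) : τ e ≠ τ' e := by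
    contrapose! h
    rw [h, sub_self, map_zero]
  have sum_circuit (Z : Finset P) (hZ : IsCircuit E Z) : ∑ e ∈ Z, φ (τ e - τ' e) = 0 := by
    rw [← map_sum, Finset.sum_sub_distrib, hτ.2 Z hZ, hτ'.2 Z hZ, sub_zero, map_zero]
  have hφC := hC.forall_mem_ne_zero sum_circuit
    (fun e he h => hdiff e he (ne_of_apply_ne_zero h)) he₀ hφ
  exact ⟨C, hC, fun e he => ⟨hdiff e he, fun heC => ne_of_apply_ne_zero (hφC e heC)⟩⟩

theorem stmt4_general [DecidableEq P] [Module (ZMod 2) Q] [Module (ZMod 2) R] {L : Finset P}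
    {M : Finset Q} {N : Finset R} {α α' : P → Q} {β : Q → R} (hα : IsMHom L M α)
    (hα' : IsMHom L M α') (hβ : IsMHom M N β) (hadj : MAdj L α α') :
    (∀ e ∈ L, (β ∘ α) e = (β ∘ α') e) ∨ MAdj L (β ∘ α) (β ∘ α') := by
  obtain ⟨C, hC, hdiff⟩ := hadj
  refine hC.eq_or_mAdj (hβ.comp hα) (hβ.comp hα') fun e he hne => (hdiff e he).mp ?_
  exact ne_of_apply_ne β hne

end General

theorem stmt4 (l m k : ℕ) (L : Finset (Fin l → ZMod 2)) (M : Finset (Fin m → ZMod 2))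
    (N : Finset (Fin k → ZMod 2))
    (α α' : (Fin l → ZMod 2) → (Fin m → ZMod 2))
    (β : (Fin m → ZMod 2) → (Fin k → ZMod 2))
    (hα : IsMHom L M α) (hα' : IsMHom L M α') (hβ : IsMHom M N β)
    (hadj : MAdj L α α') :
    (∀ e ∈ L, (β ∘ α) e = (β ∘ α') e) ∨ MAdj L (β ∘ α) (β ∘ α') :=
  stmt4_general hα hα' hβ hadj
end

section
/- Let F ⊆ (Fin k → ZMod 2) be a binary matroid, let F' ⊆ F, and suppose there is a matroid homomorphism r : F → F whose image is contained in F' and which fixes every point of F' (a retraction of F onto F'). Then for every binary matroid E ⊆ (Fin m → ZMod 2) and every pair of matroid homomorphisms τ, τ' : E → F', τ and τ' are joined by a walk in the recolouring graph mCol(E, F') if and only if they are joined by a walk in mCol(E, F). -/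
/-!
A matroid homomorphism is the restriction of a linear map, so composing with the retraction `r`
sends homomorphisms `E → F` to homomorphisms `E → F'`. If `τ` and `τ'` differ exactly on a
cocircuit `C`, then `r ∘ τ` and `r ∘ τ'` differ on a subset of `C`. Were this subset neither empty
nor all of `C`, a coordinate of their difference would have a nonempty support properly inside `C`
meeting every circuit evenly, against the minimality of `C`. Hence composing with `r` maps walks in
`mCol(E, F)` to walks in `mCol(E, F')`, and it fixes the homomorphisms into `F'`.
-/

theorem sum_zmod_two_smul {ι M : Type*} [AddCommMonoid M] [Module (ZMod 2) M] (s : Finset ι)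
    (c : ι → ZMod 2) (g : ι → M) : ∑ i ∈ s, c i • g i = ∑ i ∈ s with c i ≠ 0, g i := by
  have smul_eq_ite (x : ZMod 2) (v : M) : x • v = if x ≠ 0 then v else 0 := by
    rcases (by decide : ∀ y : ZMod 2, y = 0 ∨ y = 1) x with rfl | rfl <;> simp
  simp only [smul_eq_ite, Finset.sum_filter]

theorem even_card_filter_ne_zero_of_sum_eq_zero {ι : Type*} {s : Finset ι} {f : ι → ZMod 2}
    (hf : ∑ i ∈ s, f i = 0) : Even (s.filter (f · ≠ 0)).card := by
  rw [← ZMod.natCast_eq_zero_iff_even]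
  simpa [hf] using (sum_zmod_two_smul s f fun _ => (1 : ZMod 2)).symm

theorem exists_linearMap_comp_eq_of_ker_le_ker {K V V' W : Type*} [DivisionRing K]
    [AddCommGroup V] [Module K V] [AddCommGroup V'] [Module K V'] [AddCommGroup W] [Module K W]
    {f : V →ₗ[K] W} {g : V →ₗ[K] V'} (h : f.ker ≤ g.ker) : ∃ φ : W →ₗ[K] V', φ ∘ₗ f = g := by
  obtain ⟨φ, hφ⟩ := (f.ker.liftQ g h ∘ₗ f.quotKerEquivRange.symm.toLinearMap).exists_extend
  refine ⟨φ, LinearMap.ext fun v => ?_⟩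
  calc φ (f v) = f.ker.liftQ g h (f.quotKerEquivRange.symm ⟨f v, f.mem_range_self v⟩) :=
        LinearMap.congr_fun hφ ⟨f v, f.mem_range_self v⟩
    _ = f.ker.liftQ g h (f.ker.mkQ v) := by rw [f.quotKerEquivRange_symm_apply_image]
    _ = g v := f.ker.liftQ_apply g v

theorem exists_linearMap_forall_mem_eq {K V W ι : Type*} [DivisionRing K]
    [AddCommGroup V] [Module K V] [AddCommGroup W] [Module K W]
    {s : Finset ι} {v : ι → V} {w : ι → W}
    (h : ∀ c : ι → K, ∑ i ∈ s, c i • v i = 0 → ∑ i ∈ s, c i • w i = 0) :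
    ∃ T : V →ₗ[K] W, ∀ i ∈ s, T (v i) = w i := by
  classical
  have hker : (∑ i ∈ s, (LinearMap.proj i : (ι → K) →ₗ[K] K).smulRight (v i)).ker ≤
      (∑ i ∈ s, (LinearMap.proj i : (ι → K) →ₗ[K] K).smulRight (w i)).ker := fun c hc => by
    simpa using h c (by simpa using hc)
  obtain ⟨T, hT⟩ := exists_linearMap_comp_eq_of_ker_le_ker hker
  refine ⟨T, fun i hi => ?_⟩
  simpa [Pi.single_apply, hi] using LinearMap.congr_fun hT (Pi.single i 1)

section Homomorphisms

variable {P Q R : Type*} [AddCommGroup P] [AddCommGroup Q] [AddCommGroup R]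
  {E : Finset P} {F F' : Finset Q} {G : Finset R} {τ : P → Q}

theorem exists_ssubset_sum_eq_zero_of_not_isCircuit {Z : Finset P} (hZE : Z ⊆ E)
    (hne : Z.Nonempty) (hsum : ∑ e ∈ Z, e = 0) (hZ : ¬ IsCircuit E Z) :
    ∃ Y ⊂ Z, Y.Nonempty ∧ ∑ e ∈ Y, e = 0 := by
  by_contra! hmin
  refine hZ ⟨hZE, hne, hsum, fun Y hYZ hYne hYsum => ?_⟩
  by_contra hY
  exact hmin Y (hYZ.ssubset_of_ne hY) hYne hYsum

namespace IsMHom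

theorem mono_right (hτ : IsMHom E F' τ) (hF : F' ⊆ F) : IsMHom E F τ :=
  ⟨fun e he => hF (hτ.1 e he), hτ.2⟩

theorem sum_cycle_eq_zero (hτ : IsMHom E F τ) {Z : Finset P} (hZE : Z ⊆ E)
    (hsum : ∑ e ∈ Z, e = 0) : ∑ e ∈ Z, τ e = 0 := by
  classical
  induction Z using Finset.strongInduction with
  | H Z ih =>
    rcases Z.eq_empty_or_nonempty with rfl | hne
    · exact Finset.sum_empty
    by_cases hZ : IsCircuit E Z
    · exact hτ.2 Z hZ
    obtain ⟨Y, hYZ, hYne, hYsum⟩ :=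
      exists_ssubset_sum_eq_zero_of_not_isCircuit hZE hne hsum hZ
    have hdiff : ∑ e ∈ Z \ Y, e = 0 := by
      rwa [← Finset.sum_sdiff hYZ.subset, hYsum, add_zero] at hsum
    rw [← Finset.sum_sdiff hYZ.subset, ih Y hYZ (hYZ.subset.trans hZE) hYsum,
      ih (Z \ Y) (Finset.sdiff_ssubset hYZ.subset hYne) (Finset.sdiff_subset.trans hZE) hdiff,
      add_zero]

variable [Module (ZMod 2) P] [Module (ZMod 2) Q] in
theorem exists_linearMap_eqOn (hτ : IsMHom E F τ) : ∃ T : P →ₗ[ZMod 2] Q, Set.EqOn T τ E := by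
  refine exists_linearMap_forall_mem_eq fun c hc => ?_
  rw [sum_zmod_two_smul] at hc ⊢
  exact hτ.sum_cycle_eq_zero (Finset.filter_subset _ _) hc

variable [Module (ZMod 2) Q] [Module (ZMod 2) R] in
theorem comp_s6 {r : Q → R} (hr : IsMHom F G r) (hτ : IsMHom E F τ) : IsMHom E G (r ∘ τ) := by
  refine ⟨fun e he => hr.1 _ (hτ.1 e he), fun Z hZ => ?_⟩
  obtain ⟨T, hT⟩ := hr.exists_linearMap_eqOn
  calc ∑ e ∈ Z, r (τ e) = ∑ e ∈ Z, T (τ e) :=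
        Finset.sum_congr rfl fun e he => (hT (hτ.1 e (hZ.1 he))).symm
    _ = T (∑ e ∈ Z, τ e) := (map_sum T _ _).symm
    _ = 0 := by rw [hτ.2 Z hZ, map_zero]

end IsMHom

end Homomorphisms

section Recolouring

variable {P Q R : Type*} [AddCommGroup P] [AddCommGroup Q] [AddCommGroup R] [DecidableEq P]
  {E C : Finset P} {F F' : Finset Q} {G : Finset R} {τ τ' : P → Q}

theorem IsCocircuit.ne_zero_of_sum_circuit_eq_zero (hC : IsCocircuit E C) {f : P → ZMod 2}
    (hf : ∀ Z, IsCircuit E Z → ∑ e ∈ Z, f e = 0) (hsupp : ∀ e ∈ E, f e ≠ 0 → e ∈ C)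
    (hne : ∃ e ∈ E, f e ≠ 0) : ∀ e ∈ C, f e ≠ 0 := by
  obtain ⟨a, haE, ha⟩ := hne
  rw [← Finset.filter_eq_self]
  refine hC.2.2.2 _ (Finset.filter_subset _ _)
    ⟨a, Finset.mem_filter.2 ⟨hsupp a haE ha, ha⟩⟩ fun Z hZ => ?_
  have hinter : C.filter (f · ≠ 0) ∩ Z = Z.filter (f · ≠ 0) := by
    ext e
    simp only [Finset.mem_inter, Finset.mem_filter]
    exact ⟨fun h => ⟨h.2, h.1.2⟩, fun h => ⟨⟨hsupp e (hZ.1 h.1) h.2, h.2⟩, h.1⟩⟩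
  rw [hinter]
  exact even_card_filter_ne_zero_of_sum_eq_zero (hf Z hZ)

variable [Module (ZMod 2) Q] in
theorem IsCocircuit.eqOn_or_mAdj (hC : IsCocircuit E C) (hτ : IsMHom E F τ)
    (hτ' : IsMHom E F τ') (hsub : ∀ e ∈ E, τ e ≠ τ' e → e ∈ C) :
    (∀ e ∈ E, τ e = τ' e) ∨ MAdj E τ τ' := by
  by_cases heq : ∀ e ∈ E, τ e = τ' e
  · exact .inl heq
  push Not at heq
  obtain ⟨a, haE, ha⟩ := heq
  obtain ⟨φ, hφ⟩ : ∃ φ : Module.Dual (ZMod 2) Q, φ (τ a - τ' a) ≠ 0 := by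
    by_contra! h
    exact sub_ne_zero.2 ha ((Module.forall_dual_apply_eq_zero_iff (ZMod 2) _).1 h)
  have ne_of_ne_zero {e : P} (he : φ (τ e - τ' e) ≠ 0) : τ e ≠ τ' e := fun h => by simp [h] at he
  have hφC : ∀ e ∈ C, φ (τ e - τ' e) ≠ 0 :=
    hC.ne_zero_of_sum_circuit_eq_zero
      (fun Z hZ => by rw [← map_sum, Finset.sum_sub_distrib, hτ.2 Z hZ, hτ'.2 Z hZ, sub_zero,
        map_zero])
      (fun e he h => hsub e he (ne_of_ne_zero h)) ⟨a, haE, hφ⟩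
  exact .inr ⟨C, hC, fun e he => ⟨hsub e he, fun heC => ne_of_ne_zero (hφC e heC)⟩⟩

theorem MWalk.mono_right (h : MWalk E F' τ τ') (hF : F' ⊆ F) : MWalk E F τ τ' :=
  Relation.ReflTransGen.mono
    (fun _ _ ⟨hσ, hσ', hstep⟩ => ⟨hσ.mono_right hF, hσ'.mono_right hF, hstep⟩) _ _ h

section Comp

variable [Module (ZMod 2) Q] [Module (ZMod 2) R] {r : Q → R}

theorem MStep.comp_left (hr : IsMHom F G r) (h : MStep E F τ τ') :
    MStep E G (r ∘ τ) (r ∘ τ') := by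
  obtain ⟨hτ, hτ', heq | ⟨C, hC, hdiff⟩⟩ := h
  · exact ⟨hr.comp_s6 hτ, hr.comp_s6 hτ', .inl fun e he => congrArg r (heq e he)⟩
  · exact ⟨hr.comp_s6 hτ, hr.comp_s6 hτ', hC.eqOn_or_mAdj (hr.comp_s6 hτ) (hr.comp_s6 hτ')
      fun e he hne => (hdiff e he).1 fun h => hne (congrArg r h)⟩

theorem MWalk.comp_left (hr : IsMHom F G r) (h : MWalk E F τ τ') :
    MWalk E G (r ∘ τ) (r ∘ τ') :=
  Relation.ReflTransGen.lift (r ∘ ·) (fun _ _ => MStep.comp_left hr) _ _ h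

end Comp

end Recolouring

theorem stmt6_general {P Q : Type*} [AddCommGroup P] [DecidableEq P] [AddCommGroup Q]
    [Module (ZMod 2) Q] {F F' : Finset Q} (hF' : F' ⊆ F) {r : Q → Q} (hr : IsMHom F F' r)
    (hfix : ∀ e ∈ F', r e = e) {E : Finset P} {τ τ' : P → Q}
    (hτ : IsMHom E F' τ) (hτ' : IsMHom E F' τ') :
    MWalk E F' τ τ' ↔ MWalk E F τ τ' := by
  refine ⟨fun h => h.mono_right hF', fun h => ?_⟩
  have hcomp {σ : P → Q} (hσ : IsMHom E F' σ) : IsMHom E F' (r ∘ σ) :=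
    hr.comp_s6 (hσ.mono_right hF')
  have hstart : MStep E F' τ (r ∘ τ) :=
    ⟨hτ, hcomp hτ, .inl fun e he => (hfix _ (hτ.1 e he)).symm⟩
  have hend : MStep E F' (r ∘ τ') τ' :=
    ⟨hcomp hτ', hτ', .inl fun e he => hfix _ (hτ'.1 e he)⟩
  exact ((h.comp_left hr).head hstart).tail hend

theorem stmt6 (k : ℕ) (F F' : Finset (Fin k → ZMod 2)) (hF' : F' ⊆ F)
    (r : (Fin k → ZMod 2) → (Fin k → ZMod 2))
    (hr : IsMHom F F r) (him : ∀ e ∈ F, r e ∈ F') (hfix : ∀ e ∈ F', r e = e)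
    (m : ℕ) (E : Finset (Fin m → ZMod 2))
    (τ τ' : (Fin m → ZMod 2) → (Fin k → ZMod 2))
    (hτ : IsMHom E F' τ) (hτ' : IsMHom E F' τ') :
    MWalk E F' τ τ' ↔ MWalk E F τ τ' :=
  stmt6_general hF' ⟨him, hr.2⟩ hfix hτ hτ'
end

section
/- Let F ⊆ (Fin k → ZMod 2) be a binary matroid, let F' ⊆ F, and let r : F → F be a matroid homomorphism whose image is contained in F', which fixes every point of F', and which is equal to or adjacent to the identity map in the recolouring graph mCol(F, F) (a dismantling retraction of F onto F'). Then for every binary matroid E ⊆ (Fin m → ZMod 2) and every pair of matroid homomorphisms τ, τ' : E → F, τ and τ' are joined by a walk in mCol(E, F) if and only if r ∘ τ and r ∘ τ' are joined by a walk in mCol(E, F'). -/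
/-!
On the points of `E`, the maps killing every circuit are exactly the restrictions of
`ZMod 2`-linear maps, and the cocircuits are the minimal nonempty supports of linear functionals.
By minimality, a step of a walk replaces `τ` by `τ + φ • c` for a functional `φ` supported on a
cocircuit and a constant vector `c`. Composing with the linear extension `L` of `r` sends such a
step to `r ∘ τ + φ • L c`, again a step. Conversely, `r = id + φ • c` on `F`, so
`r ∘ τ = τ + ψ • c` where `ψ` is `φ` pulled back along `τ`; the support of `ψ` is a disjoint
union of cocircuits, and changing `τ` on one of them at a time walks from `τ` to `r ∘ τ` inside
`mCol(E, F)`.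
-/

open Module (Dual)

section Basic

variable {P Q : Type*} [AddCommGroup P] [AddCommGroup Q] {E : Finset P} {F F' : Finset Q}
  {τ τ' : P → Q}

theorem IsMHom.mono (hF : F' ⊆ F) (hτ : IsMHom E F' τ) : IsMHom E F τ :=
  ⟨fun e he => hF (hτ.1 e he), hτ.2⟩

theorem isMHom_id (E : Finset P) : IsMHom E E id :=
  ⟨fun _ he => he, fun _ hZ => hZ.2.2.1⟩

variable [DecidableEq P]

theorem MStep.symm (h : MStep E F τ τ') : MStep E F τ' τ :=
  ⟨h.2.1, h.1, h.2.2.imp (fun heq e he => (heq e he).symm)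
    fun ⟨C, hC, hdiff⟩ => ⟨C, hC, fun e he => ne_comm.trans (hdiff e he)⟩⟩

theorem MWalk.symm (h : MWalk E F τ τ') : MWalk E F τ' τ :=
  haveI : Std.Symm (MStep E F) := ⟨fun _ _ => MStep.symm⟩
  Relation.ReflTransGen.stdSymm.symm _ _ h

theorem MWalk.mono (hF : F' ⊆ F) (h : MWalk E F' τ τ') : MWalk E F τ τ' :=
  Relation.ReflTransGen.mono (fun _ _ hstep =>
    ⟨hstep.1.mono hF, hstep.2.1.mono hF, hstep.2.2⟩) _ _ h

end Basic

theorem exists_comp_eq_of_ker_le_ker {K U V W : Type*} [DivisionRing K]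
    [AddCommGroup U] [Module K U] [AddCommGroup V] [Module K V] [AddCommGroup W] [Module K W]
    {f : U →ₗ[K] V} {g : U →ₗ[K] W} (hfg : f.ker ≤ g.ker) : ∃ h : V →ₗ[K] W, h ∘ₗ f = g := by
  obtain ⟨s, hs⟩ := (f.ker.liftQ f le_rfl).exists_leftInverse_of_injective
    (Submodule.ker_liftQ_eq_bot' _ _ rfl)
  refine ⟨f.ker.liftQ g hfg ∘ₗ s, LinearMap.ext fun u => ?_⟩
  have hsu : s (f u) = f.ker.mkQ u := LinearMap.congr_fun hs (f.ker.mkQ u)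
  simp [hsu]

theorem sum_eq_zero_of_forall_isCircuit {P Q : Type*} [AddCommGroup P] [AddCommGroup Q]
    {E : Finset P} {g : P → Q} (hg : ∀ Z, IsCircuit E Z → ∑ e ∈ Z, g e = 0)
    {Z : Finset P} (hZE : Z ⊆ E) (hZ : ∑ e ∈ Z, e = 0) : ∑ e ∈ Z, g e = 0 := by
  classical
  induction Z using Finset.strongInduction with
  | H Z ih =>
    rcases Z.eq_empty_or_nonempty with rfl | hne
    · exact Finset.sum_empty
    obtain ⟨C, hCZ, hC⟩ := exists_minimal_le_of_wellFoundedLT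
      (fun D : Finset P => D.Nonempty ∧ ∑ e ∈ D, e = 0) Z ⟨hne, hZ⟩
    have hcircuit : IsCircuit E C := ⟨hCZ.trans hZE, hC.prop.1, hC.prop.2,
      fun D hDC hD hsum => hC.eq_of_le ⟨hD, hsum⟩ hDC⟩
    have hdiff : ∑ e ∈ Z \ C, e = 0 := by
      rw [Finset.sum_sdiff_eq_sub hCZ, hZ, hC.prop.2, sub_zero]
    rw [← Finset.sum_sdiff hCZ, hg C hcircuit, add_zero]
    exact ih _ (Finset.sdiff_ssubset hCZ hC.prop.1) (Finset.sdiff_subset.trans hZE) hdiff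

section Linear

variable {P Q R : Type*} [AddCommGroup P] [Module (ZMod 2) P] [AddCommGroup Q]
  [Module (ZMod 2) Q] [AddCommGroup R] [Module (ZMod 2) R]

theorem sum_smul_eq_sum_filter {ι : Type*} (s : Finset ι) (a : ι → ZMod 2) (v : ι → Q) :
    ∑ i ∈ s, a i • v i = ∑ i ∈ s with a i ≠ 0, v i := by
  rw [Finset.sum_filter]
  refine Finset.sum_congr rfl fun i _ => ?_
  split_ifs with hi
  · rw [show a i = 1 from Fin.eq_one_of_ne_zero _ hi, one_smul]
  · rw [not_not.1 hi, zero_smul]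

theorem forall_isCircuit_sum_eq_zero_iff {E : Finset P} {g : P → Q} :
    (∀ Z, IsCircuit E Z → ∑ e ∈ Z, g e = 0) ↔
      ∃ L : P →ₗ[ZMod 2] Q, ∀ e ∈ E, g e = L e := by
  classical
  constructor
  · intro hg
    let point := Fintype.linearCombination (ZMod 2) fun e : E => (e : P)
    let value := Fintype.linearCombination (ZMod 2) fun e : E => g e
    have hker : point.ker ≤ value.ker := fun a ha => by
      let Z : Finset P := ({e : E | a e ≠ 0} : Finset E).map (Function.Embedding.subtype _)
      have hpoint : point a = ∑ e ∈ Z, e := by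
        simp [point, Z, Fintype.linearCombination_apply, sum_smul_eq_sum_filter]
      have hvalue : value a = ∑ e ∈ Z, g e := by
        simp [value, Z, Fintype.linearCombination_apply, sum_smul_eq_sum_filter]
      rw [LinearMap.mem_ker, hpoint] at ha
      rw [LinearMap.mem_ker, hvalue]
      exact sum_eq_zero_of_forall_isCircuit hg (Finset.map_subtype_subset _) ha
    obtain ⟨L, hL⟩ := exists_comp_eq_of_ker_le_ker hker
    refine ⟨L, fun e he => ?_⟩
    simpa [point, value] using (LinearMap.congr_fun hL (Pi.single ⟨e, he⟩ 1)).symm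
  · rintro ⟨L, hL⟩ Z hZ
    rw [Finset.sum_congr rfl fun e he => hL e (hZ.1 he), ← map_sum, hZ.2.2.1, map_zero]

theorem isMHom_iff_exists_linearMap {E : Finset P} {F : Finset Q} {τ : P → Q} :
    IsMHom E F τ ↔
      (∀ e ∈ E, τ e ∈ F) ∧ ∃ L : P →ₗ[ZMod 2] Q, ∀ e ∈ E, τ e = L e :=
  and_congr_right' forall_isCircuit_sum_eq_zero_iff

theorem IsMHom.comp_s7 {E : Finset P} {F : Finset Q} {G : Finset R} {σ : Q → R} {τ : P → Q}
    (hσ : IsMHom F G σ) (hτ : IsMHom E F τ) : IsMHom E G (σ ∘ τ) := by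
  obtain ⟨hσF, L, hL⟩ := isMHom_iff_exists_linearMap.1 hσ
  obtain ⟨hτE, M, hM⟩ := isMHom_iff_exists_linearMap.1 hτ
  exact isMHom_iff_exists_linearMap.2 ⟨fun e he => hσF _ (hτE e he), L ∘ₗ M, fun e he => by
    rw [Function.comp_apply, hL _ (hτE e he), hM e he, LinearMap.comp_apply]⟩

/-- The support on the point set `E` of a linear functional `φ`. These supports form the cocycle
space of the binary matroid on `E`; the minimal nonempty ones are its cocircuits. -/
def cut (E : Finset P) (φ : Dual (ZMod 2) P) : Finset P := {e ∈ E | φ e ≠ 0}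

section Cut

variable {E : Finset P} {φ ψ : Dual (ZMod 2) P}

theorem mem_cut {e : P} : e ∈ cut E φ ↔ e ∈ E ∧ φ e ≠ 0 := Finset.mem_filter

theorem apply_eq_zero_of_notMem_cut {e : P} (he : e ∈ E) (hφ : e ∉ cut E φ) : φ e = 0 :=
  not_not.1 fun h => hφ (mem_cut.2 ⟨he, h⟩)

theorem apply_eq_one_of_mem_cut {e : P} (he : e ∈ cut E φ) : φ e = 1 :=
  Fin.eq_one_of_ne_zero _ (mem_cut.1 he).2

theorem cut_sub_ssubset (hne : (cut E ψ).Nonempty) (hψφ : cut E ψ ⊆ cut E φ) :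
    cut E (φ - ψ) ⊂ cut E φ := by
  obtain ⟨e, he⟩ := hne
  refine Finset.ssubset_iff_subset_ne.2 ⟨fun x hx => ?_, fun heq => ?_⟩
  · by_contra hxφ
    obtain ⟨hxE, hx⟩ := mem_cut.1 hx
    refine hx ?_
    rw [LinearMap.sub_apply, apply_eq_zero_of_notMem_cut hxE hxφ,
      apply_eq_zero_of_notMem_cut hxE (fun h => hxφ (hψφ h)), sub_zero]
  · have hmem : e ∈ cut E (φ - ψ) := heq ▸ hψφ he
    refine (mem_cut.1 hmem).2 ?_
    rw [LinearMap.sub_apply, apply_eq_one_of_mem_cut he, apply_eq_one_of_mem_cut (hψφ he),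
      sub_self]

theorem IsMHom.add_smul_of_cut_subset {F : Finset Q} {τ : P → Q} {c : Q}
    (hτ : IsMHom E F τ) (hτφ : ∀ e ∈ E, τ e + φ e • c ∈ F)
    (hψφ : cut E ψ ⊆ cut E φ) :
    IsMHom E F fun e => τ e + ψ e • c := by
  obtain ⟨hτF, L, hL⟩ := isMHom_iff_exists_linearMap.1 hτ
  refine isMHom_iff_exists_linearMap.2 ⟨fun e he => ?_, L + ψ.smulRight c, fun e he => ?_⟩
  · by_cases h : e ∈ cut E ψ
    · rw [apply_eq_one_of_mem_cut h, ← apply_eq_one_of_mem_cut (hψφ h)]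
      exact hτφ e he
    · rw [apply_eq_zero_of_notMem_cut he h, zero_smul, add_zero]
      exact hτF e he
  · rw [hL e he, LinearMap.add_apply, LinearMap.smulRight_apply]

variable [DecidableEq P]

theorem forall_isCircuit_even_card_inter_iff {D : Finset P} (hD : D ⊆ E) :
    (∀ Z, IsCircuit E Z → Even (D ∩ Z).card) ↔ ∃ φ, cut E φ = D := by
  have even_iff (Z : Finset P) :
      Even (D ∩ Z).card ↔ ∑ e ∈ Z, (if e ∈ D then (1 : ZMod 2) else 0) = 0 := by
    rw [Finset.sum_boole, ZMod.natCast_eq_zero_iff_even, Finset.filter_mem_eq_inter,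
      Finset.inter_comm]
  simp only [even_iff, forall_isCircuit_sum_eq_zero_iff]
  refine exists_congr fun φ => ⟨fun h => ?_, ?_⟩
  · ext e
    rw [mem_cut]
    refine ⟨fun ⟨heE, he⟩ => ?_, fun he => ⟨hD he, ?_⟩⟩
    · simpa [← h e heE] using he
    · simp [← h e (hD he), he]
  · rintro rfl e he
    split_ifs with h
    · exact (apply_eq_one_of_mem_cut h).symm
    · exact (apply_eq_zero_of_notMem_cut he h).symm

theorem isCocircuit_iff_minimal_cut {C : Finset P} :
    IsCocircuit E C ↔
      Minimal (fun D : Finset P => D.Nonempty ∧ ∃ φ, cut E φ = D) C := by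
  constructor
  · rintro ⟨hCE, hne, heven, hmin⟩
    refine ⟨⟨hne, (forall_isCircuit_even_card_inter_iff hCE).1 heven⟩, fun D hD hDC => ?_⟩
    exact (hmin D hDC hD.1 ((forall_isCircuit_even_card_inter_iff (hDC.trans hCE)).2 hD.2)).ge
  · intro hC
    obtain ⟨φ, hφ⟩ := hC.prop.2
    have hCE : C ⊆ E := hφ ▸ Finset.filter_subset _ _
    refine ⟨hCE, hC.prop.1, (forall_isCircuit_even_card_inter_iff hCE).2 hC.prop.2,
      fun D hDC hne heven => hC.eq_of_le ⟨hne, ?_⟩ hDC⟩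
    exact (forall_isCircuit_even_card_inter_iff (hDC.trans hCE)).1 heven

theorem exists_isCocircuit_cut_subset (hφ : (cut E φ).Nonempty) :
    ∃ ψ, IsCocircuit E (cut E ψ) ∧ cut E ψ ⊆ cut E φ := by
  obtain ⟨C, hCφ, hC⟩ := exists_minimal_le_of_wellFoundedLT
    (fun D : Finset P => D.Nonempty ∧ ∃ φ, cut E φ = D) (cut E φ) ⟨hφ, φ, rfl⟩
  obtain ⟨ψ, rfl⟩ := hC.prop.2
  exact ⟨ψ, isCocircuit_iff_minimal_cut.2 hC, hCφ⟩

theorem IsCocircuit.exists_eq_cut {C : Finset P} (hC : IsCocircuit E C) : ∃ φ, C = cut E φ :=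
  (isCocircuit_iff_minimal_cut.1 hC).prop.2.imp fun _ => Eq.symm

theorem IsCocircuit.eq_zero_or_eq_of_cut_subset (hφ : IsCocircuit E (cut E φ))
    (hψφ : cut E ψ ⊆ cut E φ) : (∀ e ∈ E, ψ e = 0) ∨ ∀ e ∈ E, ψ e = φ e := by
  rcases (cut E ψ).eq_empty_or_nonempty with hempty | hne
  · exact .inl fun e he => apply_eq_zero_of_notMem_cut he (hempty ▸ Finset.notMem_empty e)
  · have hcut : cut E ψ = cut E φ :=
      (isCocircuit_iff_minimal_cut.1 hφ).eq_of_le ⟨hne, ψ, rfl⟩ hψφ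
    refine .inr fun e he => ?_
    by_cases h : e ∈ cut E φ
    · rw [apply_eq_one_of_mem_cut h, apply_eq_one_of_mem_cut (hcut ▸ h)]
    · rw [apply_eq_zero_of_notMem_cut he h, apply_eq_zero_of_notMem_cut he (hcut ▸ h)]

-- Every functional of `Q` composed with `L` is `0` or `φ` on `E`, and functionals separate points.
theorem IsCocircuit.exists_eq_smul (hφ : IsCocircuit E (cut E φ)) {L : P →ₗ[ZMod 2] Q}
    (hL : ∀ e ∈ E, φ e = 0 → L e = 0) : ∃ c, ∀ e ∈ E, L e = φ e • c := by
  obtain ⟨e₀, he₀⟩ := hφ.2.1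
  refine ⟨L e₀, fun e he => ?_⟩
  rw [← sub_eq_zero, ← Module.forall_dual_apply_eq_zero_iff (ZMod 2)]
  intro χ
  have hsubset : cut E (χ ∘ₗ L) ⊆ cut E φ := fun x hx => by
    obtain ⟨hxE, hx⟩ := mem_cut.1 hx
    refine mem_cut.2 ⟨hxE, fun h => hx ?_⟩
    rw [LinearMap.comp_apply, hL x hxE h, map_zero]
  have hχL : χ (L e) = φ e * χ (L e₀) := by
    rcases hφ.eq_zero_or_eq_of_cut_subset hsubset with h | h
    · rw [show χ (L e) = 0 from h e he, show χ (L e₀) = 0 from h e₀ (mem_cut.1 he₀).1, mul_zero]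
    · rw [show χ (L e) = φ e from h e he, show χ (L e₀) = φ e₀ from h e₀ (mem_cut.1 he₀).1,
        apply_eq_one_of_mem_cut he₀, mul_one]
  rw [map_sub, map_smul, smul_eq_mul, hχL, sub_self]

end Cut

section Walk

variable [DecidableEq P] {E : Finset P} {F : Finset Q} {τ τ' : P → Q}

theorem mStep_iff_exists_smul : MStep E F τ τ' ↔
    IsMHom E F τ ∧ IsMHom E F τ' ∧ ∃ (φ : Dual (ZMod 2) P) (c : Q),
      (c ≠ 0 → IsCocircuit E (cut E φ)) ∧ ∀ e ∈ E, τ' e = τ e + φ e • c := by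
  refine and_congr_right fun hτ => and_congr_right fun hτ' => ⟨?_, ?_⟩
  · rintro (heq | ⟨C, hC, hdiff⟩)
    · exact ⟨0, 0, fun h => absurd rfl h, fun e he => by simp [heq e he]⟩
    obtain ⟨φ, rfl⟩ := hC.exists_eq_cut
    obtain ⟨-, L, hL⟩ := isMHom_iff_exists_linearMap.1 hτ
    obtain ⟨-, L', hL'⟩ := isMHom_iff_exists_linearMap.1 hτ'
    have hvanish : ∀ e ∈ E, φ e = 0 → (L' - L) e = 0 := fun e he hφe => by
      have heq : τ e = τ' e := not_not.1 fun h => (mem_cut.1 ((hdiff e he).1 h)).2 hφe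
      rw [LinearMap.sub_apply, ← hL e he, ← hL' e he, heq, sub_self]
    obtain ⟨c, hc⟩ := hC.exists_eq_smul hvanish
    refine ⟨φ, c, fun _ => hC, fun e he => ?_⟩
    rw [← hc e he, LinearMap.sub_apply, ← hL e he, ← hL' e he, add_sub_cancel]
  · rintro ⟨φ, c, hφ, hτφ⟩
    by_cases hc : c = 0
    · exact .inl fun e he => by simp [hτφ e he, hc]
    · exact .inr ⟨cut E φ, hφ hc, fun e he => by simp [hτφ e he, mem_cut, he, hc]⟩

theorem MStep.comp_s7 {G : Finset R} {σ : Q → R} (hσ : IsMHom F G σ) (h : MStep E F τ τ') :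
    MStep E G (σ ∘ τ) (σ ∘ τ') := by
  obtain ⟨hτ, hτ', φ, c, hφ, hτφ⟩ := mStep_iff_exists_smul.1 h
  obtain ⟨-, L, hL⟩ := isMHom_iff_exists_linearMap.1 hσ
  refine mStep_iff_exists_smul.2 ⟨hσ.comp_s7 hτ, hσ.comp_s7 hτ', φ, L c,
    fun hLc => hφ fun hc => hLc (by rw [hc, map_zero]), fun e he => ?_⟩
  rw [Function.comp_apply, Function.comp_apply, hL _ (hτ'.1 e he), hL _ (hτ.1 e he), hτφ e he,
    map_add, map_smul]

theorem MWalk.comp_s7 {G : Finset R} {σ : Q → R} (hσ : IsMHom F G σ) (h : MWalk E F τ τ') :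
    MWalk E G (σ ∘ τ) (σ ∘ τ') :=
  Relation.ReflTransGen.lift (σ ∘ ·) (fun _ _ => MStep.comp_s7 hσ) _ _ h

theorem mWalk_of_eq_add_smul {φ : Dual (ZMod 2) P} {c : Q} (hτ : IsMHom E F τ)
    (hτ' : IsMHom E F τ') (hτφ : ∀ e ∈ E, τ' e = τ e + φ e • c) : MWalk E F τ τ' := by
  induction hD : cut E φ using Finset.strongInduction generalizing τ φ with
  | H D ih =>
    subst hD
    rcases (cut E φ).eq_empty_or_nonempty with hempty | hne
    · refine .single ⟨hτ, hτ', .inl fun e he => ?_⟩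
      rw [hτφ e he, apply_eq_zero_of_notMem_cut he (hempty ▸ Finset.notMem_empty e), zero_smul,
        add_zero]
    obtain ⟨ψ, hψ, hψφ⟩ := exists_isCocircuit_cut_subset hne
    have hτψ : IsMHom E F fun e => τ e + ψ e • c :=
      hτ.add_smul_of_cut_subset (fun e he => hτφ e he ▸ hτ'.1 e he) hψφ
    have hstep : MStep E F τ fun e => τ e + ψ e • c :=
      mStep_iff_exists_smul.2 ⟨hτ, hτψ, ψ, c, fun _ => hψ, fun _ _ => rfl⟩
    refine .head hstep (ih _ (cut_sub_ssubset hψ.2.1 hψφ) hτψ (fun e he => ?_) rfl)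
    rw [hτφ e he, LinearMap.sub_apply, sub_smul, add_assoc, add_sub_cancel]

theorem mWalk_comp_of_mStep_id {r : Q → Q} [DecidableEq Q] (hr : MStep F F id r)
    (hτ : IsMHom E F τ) : MWalk E F τ (r ∘ τ) := by
  obtain ⟨-, hrF, φ, c, -, hrφ⟩ := mStep_iff_exists_smul.1 hr
  obtain ⟨hτF, L, hL⟩ := isMHom_iff_exists_linearMap.1 hτ
  refine mWalk_of_eq_add_smul (φ := φ ∘ₗ L) (c := c) hτ (hrF.comp_s7 hτ) fun e he => ?_
  rw [Function.comp_apply, hrφ _ (hτF e he), id_eq, LinearMap.comp_apply, ← hL e he]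

theorem stmt7_general [DecidableEq Q] {F' : Finset Q} (hF' : F' ⊆ F) {r : Q → Q}
    (hr : IsMHom F F' r) (hdis : MStep F F id r) (hτ : IsMHom E F τ) (hτ' : IsMHom E F τ') :
    MWalk E F τ τ' ↔ MWalk E F' (r ∘ τ) (r ∘ τ') := by
  refine ⟨fun h => h.comp_s7 hr, fun h => ?_⟩
  have hstart : MWalk E F τ (r ∘ τ) := mWalk_comp_of_mStep_id hdis hτ
  have hend : MWalk E F (r ∘ τ') τ' := (mWalk_comp_of_mStep_id hdis hτ').symm
  exact (hstart.trans (h.mono hF')).trans hend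

end Walk

end Linear

theorem stmt7 (k : ℕ) (F F' : Finset (Fin k → ZMod 2)) (hF' : F' ⊆ F)
    (r : (Fin k → ZMod 2) → (Fin k → ZMod 2))
    (hr : IsMHom F F r) (him : ∀ e ∈ F, r e ∈ F') (hfix : ∀ e ∈ F', r e = e)
    (hdis : (∀ e ∈ F, r e = e) ∨ MAdj F (id : (Fin k → ZMod 2) → (Fin k → ZMod 2)) r)
    (m : ℕ) (E : Finset (Fin m → ZMod 2))
    (τ τ' : (Fin m → ZMod 2) → (Fin k → ZMod 2))
    (hτ : IsMHom E F τ) (hτ' : IsMHom E F τ') :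
    MWalk E F τ τ' ↔ MWalk E F' (r ∘ τ) (r ∘ τ') :=
  stmt7_general hF' ⟨him, hr.2⟩
    ⟨isMHom_id F, hr, hdis.imp_left fun h e he => (h e he).symm⟩ hτ hτ'
end

section
/- Let G and H be finite simple graphs and let φ : G → H be a graph homomorphism. Then the map from E_G to E_H sending the point 𝟙_u + 𝟙_v (for each edge uv of G) to 𝟙_{φ(u)} + 𝟙_{φ(v)} is well defined and is a matroid homomorphism from the graphic matroid M(G) to the graphic matroid M(H). -/
/-!
Over a field, any assignment on a linearly independent family extends to a linear map. The vectors
`ind v` are linearly independent, so there is a linear map `τ` with `τ (ind v) = ind (φ v)` for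
every vertex `v`. By additivity it sends the point of each edge to the point of the image edge and
vanishing sums to vanishing sums.
-/

theorem exists_linearMap_apply_eq_of_linearIndependent {K M N ι : Type*} [DivisionRing K]
    [AddCommGroup M] [Module K M] [AddCommGroup N] [Module K N] {b : ι → M}
    (hb : LinearIndependent K b) (c : ι → N) : ∃ L : M →ₗ[K] N, ∀ i, L (b i) = c i := by
  obtain ⟨coords, h_coords⟩ :=
    (Finsupp.linearCombination K b).exists_leftInverse_of_injective (LinearMap.ker_eq_bot.2 hb)
  have coords_apply (i : ι) : coords (b i) = Finsupp.single i 1 := by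
    simpa using LinearMap.congr_fun h_coords (Finsupp.single i 1)
  exact ⟨Finsupp.linearCombination K c ∘ₗ coords, fun i => by simp [coords_apply]⟩

theorem linearIndependent_ind (V : Type*) [DecidableEq V] :
    LinearIndependent (ZMod 2) (ind : V → V → ZMod 2) :=
  Pi.linearIndependent_single_one V (ZMod 2)

theorem isMHom_of_mapsTo {P Q T : Type*} [AddCommGroup P] [AddCommGroup Q] [FunLike T P Q]
    [AddMonoidHomClass T P Q] {E : Finset P} {F : Finset Q} (τ : T) (hτ : ∀ e ∈ E, τ e ∈ F) :
    IsMHom E F τ := by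
  refine ⟨hτ, fun Z ⟨_, _, hsum, _⟩ => ?_⟩
  rw [← map_sum, hsum, map_zero]

theorem stmt9_general {V W : Type*} [DecidableEq V] [DecidableEq W]
    (G : SimpleGraph V) (H : SimpleGraph W) (φ : G →g H)
    (EG : Finset (V → ZMod 2)) (EH : Finset (W → ZMod 2))
    (hEG : ∀ x, x ∈ EG ↔ ∃ u v, G.Adj u v ∧ x = ind u + ind v)
    (hEH : ∀ x, x ∈ EH ↔ ∃ u v, H.Adj u v ∧ x = ind u + ind v) :
    ∃ τ : (V → ZMod 2) →ₗ[ZMod 2] (W → ZMod 2),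
      (∀ u v, G.Adj u v → τ (ind u + ind v) = ind (φ u) + ind (φ v)) ∧
      IsMHom EG EH τ := by
  obtain ⟨τ, τ_ind⟩ := exists_linearMap_apply_eq_of_linearIndependent
    (linearIndependent_ind V) (fun v => (ind (φ v) : W → ZMod 2))
  have τ_edge (u v : V) : τ (ind u + ind v) = ind (φ u) + ind (φ v) := by
    rw [map_add, τ_ind, τ_ind]
  refine ⟨τ, fun u v _ => τ_edge u v, isMHom_of_mapsTo τ fun e he => ?_⟩
  obtain ⟨u, v, huv, rfl⟩ := (hEG e).1 he
  exact (hEH _).2 ⟨φ u, φ v, φ.map_adj huv, τ_edge u v⟩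

theorem stmt9 {V W : Type*} [Fintype V] [Fintype W] [DecidableEq V] [DecidableEq W]
    (G : SimpleGraph V) (H : SimpleGraph W) (φ : G →g H)
    (EG : Finset (V → ZMod 2)) (EH : Finset (W → ZMod 2))
    (hEG : ∀ x, x ∈ EG ↔ ∃ u v, G.Adj u v ∧ x = ind u + ind v)
    (hEH : ∀ x, x ∈ EH ↔ ∃ u v, H.Adj u v ∧ x = ind u + ind v) :
    ∃ τ : (V → ZMod 2) → (W → ZMod 2),
      (∀ u v, G.Adj u v → τ (ind u + ind v) = ind (φ u) + ind (φ v)) ∧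
      IsMHom EG EH τ := by
  obtain ⟨τ, hτ⟩ := stmt9_general G H φ EG EH hEG hEH
  exact ⟨τ, hτ⟩
end

section
/- Let E be the set of the six weight-2 vectors in (Fin 4 → ZMod 2) (a representation of the graphic matroid M(K_4)), let E' ⊆ E be the three weight-2 vectors whose last coordinate is 0 (a representation of M(K_3)), and let C = {e ∈ E : the last coordinate of e is 1}. Define r : E → E by r(e) = e + (1,1,1,1) for e ∈ C and r(e) = e otherwise. Then r is a matroid homomorphism from E to E with image E' that fixes every point of E', the set C is a cocircuit of E, and r is adjacent to the identity map in the recolouring graph mCol(E, E); that is, M(K_4) dismantles to M(K_3). -/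
/-!
On `E` the map `r` is the transvection `e ↦ e + e 3 • (1, 1, 1, 1)`. It is linear, so it preserves
every vanishing sum, and as `(1, 1, 1, 1) 3 = 1` it maps into the hyperplane `x 3 = 0`.

The set `C` on which it moves points is the complement of that hyperplane in `E`, so it meets every
circuit evenly. In `M(K_4)` it is the star of a vertex: any two of its edges lie in a triangle whose
third edge avoids the star, so no proper nonempty subset of `C` meets all triangles evenly.
-/

section Circuits

variable {P Q : Type*} [AddCommGroup P] [AddCommGroup Q] {E Z : Finset P} {F : Finset Q}

theorem IsCircuit.sum_map_eq_zero {G : Type*} [FunLike G P Q] [AddMonoidHomClass G P Q]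
    (hZ : IsCircuit E Z) (f : G) : ∑ e ∈ Z, f e = 0 := by
  rw [← map_sum, hZ.2.2.1, map_zero]

theorem isMHom_of_map_mem {G : Type*} [FunLike G P Q] [AddMonoidHomClass G P Q] (f : G)
    (hf : ∀ e ∈ E, f e ∈ F) : IsMHom E F f :=
  ⟨hf, fun _ hZ => hZ.sum_map_eq_zero f⟩

theorem IsMHom.congr {τ τ' : P → Q} (hτ : IsMHom E F τ) (h : ∀ e ∈ E, τ e = τ' e) :
    IsMHom E F τ' :=
  ⟨fun e he => h e he ▸ hτ.1 e he, fun Z hZ =>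
    (Finset.sum_congr rfl fun e he => (h e (hZ.1 he)).symm).trans (hτ.2 Z hZ)⟩

theorem one_lt_card_of_sum_eq_zero (hne : Z.Nonempty) (hsum : ∑ e ∈ Z, e = 0) (h0 : 0 ∉ Z) :
    1 < Z.card := by
  by_contra! hcard
  obtain ⟨e, rfl⟩ := Finset.card_eq_one.1 (hcard.antisymm hne.card_pos)
  simp_all

theorem isCircuit_of_card_le_three (hZE : Z ⊆ E) (hne : Z.Nonempty) (hsum : ∑ e ∈ Z, e = 0)
    (h0 : 0 ∉ Z) (hcard : Z.card ≤ 3) : IsCircuit E Z := by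
  classical
  refine ⟨hZE, hne, hsum, fun Z' hZ' hne' hsum' => ?_⟩
  by_contra hneq
  have hdiff_ne : (Z \ Z').Nonempty :=
    Finset.sdiff_nonempty.2 fun h => hneq (hZ'.antisymm h)
  have hdiff_sum : ∑ e ∈ Z \ Z', e = 0 := by
    simpa [hsum, hsum'] using Finset.sum_sdiff (f := fun e => e) hZ'
  have hdiff_card := one_lt_card_of_sum_eq_zero hdiff_ne hdiff_sum (by simp [h0])
  have hcard' := one_lt_card_of_sum_eq_zero hne' hsum' fun h => h0 (hZ' h)
  have := Finset.card_sdiff_add_card_eq_card hZ'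
  omega

theorem MAdj.congr_right [DecidableEq P] {τ τ' τ'' : P → Q} (hadj : MAdj E τ τ')
    (h : ∀ e ∈ E, τ' e = τ'' e) : MAdj E τ τ'' := by
  obtain ⟨C, hC, hdiff⟩ := hadj
  exact ⟨C, hC, fun e he => h e he ▸ hdiff e he⟩

theorem isCocircuit_of_forall_pair [DecidableEq P] {C : Finset P} (hCE : C ⊆ E)
    (hne : C.Nonempty) (heven : ∀ Z, IsCircuit E Z → Even (C ∩ Z).card)
    (hpair : ∀ a ∈ C, ∀ b ∈ C, a ≠ b → ∃ Z, IsCircuit E Z ∧ C ∩ Z = {a, b}) :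
    IsCocircuit E C := by
  refine ⟨hCE, hne, heven, fun C' hC' ⟨a, ha⟩ heven' => hC'.antisymm fun b hb => ?_⟩
  by_contra hbC'
  obtain ⟨Z, hZ, hCZ⟩ := hpair a (hC' ha) b hb fun hab => hbC' (hab ▸ ha)
  have hC'Z : C' ∩ Z = {a} := by
    rw [← Finset.inter_eq_left.2 hC', Finset.inter_assoc, hCZ,
      Finset.inter_insert_of_mem ha, Finset.inter_singleton_of_notMem hbC', insert_empty_eq]
  simpa [hC'Z] using heven' Z hZ

end Circuits

section BinarySpace

variable {P : Type*} [AddCommGroup P] [Module (ZMod 2) P] {E Z : Finset P}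
  {φ : Module.Dual (ZMod 2) P} {t : P}

theorem isCircuit_triangle [DecidableEq P] {a b : P} (ha : a ∈ E) (hb : b ∈ E) (hab : a + b ∈ E)
    (ha0 : a ≠ 0) (hb0 : b ≠ 0) (hne : a ≠ b) : IsCircuit E {a, b, a + b} := by
  have hab0 : a + b ≠ 0 := by rwa [← ZModModule.sub_eq_add, sub_ne_zero]
  refine isCircuit_of_card_le_three (by simp [Finset.insert_subset_iff, ha, hb, hab])
    (Finset.insert_nonempty _ _) ?_ (by simp [ha0.symm, hb0.symm, hab0.symm])
    Finset.card_le_three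
  rw [Finset.sum_insert (by simp [hne, hb0]), Finset.sum_insert (by simp [ha0]),
    Finset.sum_singleton, ← add_assoc, ZModModule.add_self]

theorem IsCircuit.even_card_filter_inter [DecidableEq P] (hZ : IsCircuit E Z)
    (φ : Module.Dual (ZMod 2) P) : Even ({e ∈ E | φ e = 1} ∩ Z).card := by
  have hinter : {e ∈ E | φ e = 1} ∩ Z = {e ∈ Z | φ e = 1} := by
    rw [Finset.filter_inter, Finset.inter_eq_right.2 hZ.1]
  have hindicator : ∀ x : ZMod 2, (if x = 1 then 1 else 0) = x := by decide
  rw [hinter, ← ZMod.natCast_eq_zero_iff_even, Finset.natCast_card_filter]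
  simpa only [hindicator] using hZ.sum_map_eq_zero φ

theorem isCocircuit_filter_of_add_mem [DecidableEq P] (hne : ∃ e ∈ E, φ e = 1)
    (hadd : ∀ a ∈ E, ∀ b ∈ E, φ a = 1 → φ b = 1 → a ≠ b → a + b ∈ E) :
    IsCocircuit E {e ∈ E | φ e = 1} := by
  have ne_zero_of_apply {e : P} (he : φ e = 1) : e ≠ 0 := by
    rintro rfl
    simp at he
  refine isCocircuit_of_forall_pair (Finset.filter_subset _ _) (Finset.filter_nonempty_iff.2 hne)
    (fun Z hZ => hZ.even_card_filter_inter φ) fun a ha b hb hab => ?_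
  obtain ⟨haE, hφa⟩ := Finset.mem_filter.1 ha
  obtain ⟨hbE, hφb⟩ := Finset.mem_filter.1 hb
  have hab_notMem : a + b ∉ {e ∈ E | φ e = 1} := by
    simp [hφa, hφb, CharTwo.add_self_eq_zero]
  refine ⟨{a, b, a + b}, isCircuit_triangle haE hbE (hadd a haE b hbE hφa hφb hab)
    (ne_zero_of_apply hφa) (ne_zero_of_apply hφb) hab, ?_⟩
  rw [Finset.inter_insert_of_mem ha, Finset.inter_insert_of_mem hb,
    Finset.inter_singleton_of_notMem hab_notMem, insert_empty_eq]

theorem transvection_apply_eq_ite (φ : Module.Dual (ZMod 2) P) (t e : P) :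
    LinearMap.transvection φ t e = if φ e = 1 then e + t else e := by
  rw [LinearMap.transvection.apply]
  split_ifs with h
  · rw [h, one_smul]
  · have hzero : φ e = 0 := of_not_not fun h0 => h (Fin.eq_one_of_ne_zero (φ e) h0)
    rw [hzero, zero_smul, add_zero]

theorem apply_transvection_eq_zero (ht : φ t = 1) (e : P) :
    φ (LinearMap.transvection φ t e) = 0 := by
  simp [LinearMap.transvection.apply, ht, CharTwo.add_self_eq_zero]

theorem IsCocircuit.mAdj_id_transvection [DecidableEq P] (hC : IsCocircuit E {e ∈ E | φ e = 1})
    (ht : t ≠ 0) : MAdj E id (LinearMap.transvection φ t) := by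
  refine ⟨_, hC, fun e he => ?_⟩
  by_cases h : φ e = 1 <;> simp [transvection_apply_eq_ite, h, he, ht]

end BinarySpace

section Weight

variable {n : ℕ}

theorem wt_add_one_add_wt (x : Fin n → ZMod 2) : wt (x + fun _ => 1) + wt x = n := by
  have hflip : ∀ y : ZMod 2, y + 1 ≠ 0 ↔ ¬y ≠ 0 := by decide
  simp only [wt, Pi.add_apply, hflip]
  rw [add_comm, Finset.card_filter_add_card_filter_not, Finset.card_univ, Fintype.card_fin]

theorem ind_add_ind_apply {V : Type*} [DecidableEq V] {i j : V} (hij : i ≠ j) (k : V) :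
    (ind i + ind j) k = if k = i ∨ k = j then 1 else 0 := by
  simp only [ind, Pi.add_apply, Pi.single_apply]
  grind

theorem wt_eq_two_iff {x : Fin n → ZMod 2} : wt x = 2 ↔ ∃ i j, i ≠ j ∧ x = ind i + ind j := by
  have eq_ite_iff (y : ZMod 2) (p : Prop) [Decidable p] :
      (y ≠ 0 ↔ p) ↔ y = if p then 1 else 0 := by
    by_cases hp : p <;> simp only [hp, if_true, if_false] <;> revert y <;> decide
  refine Finset.card_eq_two.trans (exists₂_congr fun i j => and_congr_right fun hij => ?_)
  rw [Finset.ext_iff, funext_iff]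
  refine forall_congr' fun k => ?_
  simpa only [Finset.mem_filter_univ, Finset.mem_insert, Finset.mem_singleton,
    ind_add_ind_apply hij] using eq_ite_iff (x k) (k = i ∨ k = j)

theorem exists_eq_ind_add_ind {x : Fin n → ZMod 2} {k : Fin n} (hx : wt x = 2) (hk : x k = 1) :
    ∃ i, x = ind i + ind k := by
  obtain ⟨i, j, -, rfl⟩ := wt_eq_two_iff.1 hx
  obtain rfl | rfl : k = i ∨ k = j := by
    by_contra! h
    simp [ind, h] at hk
  · exact ⟨j, add_comm _ _⟩
  · exact ⟨i, rfl⟩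

theorem wt_add_eq_two_of_apply_eq_one {a b : Fin n → ZMod 2} {k : Fin n} (ha : wt a = 2)
    (hb : wt b = 2) (hak : a k = 1) (hbk : b k = 1) (hab : a ≠ b) : wt (a + b) = 2 := by
  obtain ⟨i, rfl⟩ := exists_eq_ind_add_ind ha hak
  obtain ⟨j, rfl⟩ := exists_eq_ind_add_ind hb hbk
  refine wt_eq_two_iff.2 ⟨i, j, fun hij => hab (by rw [hij]), ?_⟩
  rw [add_comm (ind j), ZModModule.add_add_add_cancel]

end Weight

theorem stmt16 (E E' C : Finset (Fin 4 → ZMod 2))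
    (hE : ∀ x, x ∈ E ↔ wt x = 2)
    (hE' : ∀ x, x ∈ E' ↔ (wt x = 2 ∧ x 3 = 0))
    (hC : ∀ x, x ∈ C ↔ (wt x = 2 ∧ x 3 = 1))
    (r : (Fin 4 → ZMod 2) → (Fin 4 → ZMod 2))
    (hr : ∀ e, r e = if e ∈ C then e + (fun _ => 1) else e) :
    IsMHom E E r ∧ (∀ e ∈ E, r e ∈ E') ∧ (∀ e ∈ E', r e = e) ∧
      IsCocircuit E C ∧ MAdj E (id : (Fin 4 → ZMod 2) → (Fin 4 → ZMod 2)) r := by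
  let φ : Module.Dual (ZMod 2) (Fin 4 → ZMod 2) := LinearMap.proj 3
  let ρ := LinearMap.transvection φ fun _ => 1
  obtain rfl : C = {e ∈ E | φ e = 1} := by
    ext e
    rw [hC, Finset.mem_filter, hE]
    rfl
  have hρr : ∀ e ∈ E, ρ e = r e := fun e he => by
    simp [ρ, hr, transvection_apply_eq_ite, he]
  have hρE : ∀ e ∈ E, ρ e ∈ E := fun e he => by
    have hcompl := wt_add_one_add_wt e
    rw [hE] at he ⊢
    rw [transvection_apply_eq_ite]
    split_ifs <;> omega
  have hcocircuit : IsCocircuit E {e ∈ E | φ e = 1} :=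
    isCocircuit_filter_of_add_mem ⟨ind 0 + ind 3, (hE _).2 (by decide), by decide⟩
      fun a ha b hb hφa hφb hab =>
        (hE _).2 (wt_add_eq_two_of_apply_eq_one ((hE a).1 ha) ((hE b).1 hb) hφa hφb hab)
  refine ⟨(isMHom_of_map_mem ρ hρE).congr hρr, fun e he => ?_, fun e he => ?_, hcocircuit,
    (hcocircuit.mAdj_id_transvection (Function.ne_iff.2 ⟨0, one_ne_zero⟩)).congr_right hρr⟩
  · rw [← hρr e he, hE']
    exact ⟨(hE _).1 (hρE e he), apply_transvection_eq_zero (φ := φ) rfl e⟩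
  · rw [hr, if_neg fun h => zero_ne_one (((hE' e).1 he).2.symm.trans ((hC e).1 h).2)]
end
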